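/- Under dichotomous valuations, envy-freeness can be achieved with total subsidy at most n − 1: there exists a complete allocation A and subsidies p ∈ ℝ_{≥0}^n with ∑_i p_i ≤ n − 1 such that (A, p) is an envy-free solution. -/

import Mathlib

namespace DichSub

lemma first_step {N : Type*} (r : N → N → Prop) (k i : N) (h : Relation.ReflTransGen r k i) :
    k ≠ i → ∃ k', k' ≠ k ∧ r k k' ∧
      Relation.ReflTransGen (fun a b => r a b ∧ a ≠ k ∧ b ≠ k) k' i := by
  induction h with
  | refl => intro h; exact absurd rfl h
  | @tail b c hb hbc ih =>
    intro hkc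
    by_cases hkb : k = b
    · subst hkb
      exact ⟨c, hkc.symm, hbc, .refl⟩
    · obtain ⟨k', h1, h2, h3⟩ := ih hkb
      exact ⟨k', h1, h2, h3.tail ⟨hbc, Ne.symm hkb, hkc.symm⟩⟩

/-- A path from `k` to `i` yields a permutation closing it up. -/
lemma exists_perm {N : Type*} [DecidableEq N] (S : Finset N) :
    ∀ (r : N → N → Prop) (_ : ∀ a b, r a b → a ∈ S ∧ b ∈ S) (k i : N) (_ : k ∈ S)
      (_ : Relation.ReflTransGen r k i),
      ∃ σ : Equiv.Perm N, σ i = k ∧ (∀ j, j ≠ i → r j (σ j) ∨ σ j = j) ∧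
        ∀ j, j ∉ S → σ j = j := by
  induction S using Finset.strongInduction with
  | H S ih =>
    intro r hr k i hk h
    by_cases hki : k = i
    · subst hki
      exact ⟨1, rfl, fun j _ => Or.inr rfl, fun j _ => rfl⟩
    · obtain ⟨k', h1, h2, h3⟩ := first_step r k i h hki
      obtain ⟨σ, hs1, hs2, hs3⟩ := ih (S.erase k) (Finset.erase_ssubset hk) _
        (by
          rintro a b ⟨hab, ha, hb⟩
          exact ⟨Finset.mem_erase.2 ⟨ha, (hr a b hab).1⟩, Finset.mem_erase.2 ⟨hb, (hr a b hab).2⟩⟩)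
        k' i (Finset.mem_erase.2 ⟨h1, (hr _ _ h2).2⟩) h3
      have hi : i ∈ S := by
        rcases Relation.ReflTransGen.cases_tail h with h | ⟨c, _, hc⟩
        · exact absurd h.symm hki
        · exact (hr _ _ hc).2
      have hsk : σ k = k := hs3 k (by simp)
      refine ⟨σ * Equiv.swap i k, by simp [hsk], ?_, ?_⟩
      · intro j hj
        by_cases hjk : j = k
        · subst hjk
          left
          simpa [hs1] using h2
        · rw [Equiv.Perm.mul_apply, Equiv.swap_apply_of_ne_of_ne hj hjk]
          rcases hs2 j hj with h | h
          · exact Or.inl h.1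
          · exact Or.inr h
      · intro j hj
        have hji : j ≠ i := by rintro rfl; exact hj hi
        have hjk : j ≠ k := by rintro rfl; exact hj hk
        rw [Equiv.Perm.mul_apply, Equiv.swap_apply_of_ne_of_ne hji hjk]
        exact hs3 j (fun h => hj (Finset.mem_of_mem_erase h))

/-- A closed-under-predecessors, strongly connected set exists. -/
lemma exists_source {N : Type*} [Fintype N] [Nonempty N] (R : N → N → Prop) :
    ∃ C : Finset N, C.Nonempty ∧ (∀ a b, R a b → b ∈ C → a ∈ C) ∧
      ∀ x ∈ C, ∀ y ∈ C, Relation.ReflTransGen R x y := by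
  classical
  let anc : N → Finset N := fun v => Finset.univ.filter fun x => Relation.ReflTransGen R x v
  have hanc : ∀ v x, x ∈ anc v ↔ Relation.ReflTransGen R x v := by simp [anc]
  obtain ⟨v, hv⟩ := Finite.exists_min (fun v => (anc v).card)
  refine ⟨anc v, ⟨v, (hanc _ _).2 .refl⟩, ?_, ?_⟩
  · intro a b hab hb
    rw [hanc] at *
    exact hb.head hab
  · intro x hx y hy
    have hsub : anc y ⊆ anc v := by
      intro z hz
      rw [hanc] at *
      exact hz.trans hy
    have : anc y = anc v := Finset.eq_of_subset_of_card_le hsub (hv y)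
    rw [← this, hanc] at hx
    exact hx

def State {N G : Type*} (w : N → Finset G → ℤ) (T : Finset G) : Prop :=
  ∃ (A : N → Finset G) (q : N → ℤ),
    (∀ i j, i ≠ j → Disjoint (A i) (A j)) ∧ (∀ x, (∃ i, x ∈ A i) ↔ x ∈ T) ∧
    (∀ i, q i = 0 ∨ q i = 1) ∧ ∀ i j, w i (A j) + q j ≤ w i (A i) + q i

lemma finish {N G : Type*} [DecidableEq N] [DecidableEq G] (w : N → Finset G → ℤ) (T : Finset G)
    (A : N → Finset G) (q : N → ℤ) (g : G) (hg : g ∉ T)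
    (hdis : ∀ i j, i ≠ j → Disjoint (A i) (A j)) (hcov : ∀ x, (∃ i, x ∈ A i) ↔ x ∈ T)
    (k : N) (σ : Equiv.Perm N) (B : N → Finset G) (hBk : B k = insert g (A k))
    (hB : ∀ b, b ≠ k → B b = A b)
    (hq : ∀ i, q i = 0 ∨ q i = 1)
    (hef : ∀ a b, w a (B b) + q b ≤ w a (B (σ a)) + q (σ a)) :
    State w (insert g T) := by
  have hgA : ∀ i, g ∉ A i := fun i h => hg ((hcov g).1 ⟨i, h⟩)
  have hBdis : ∀ i j, i ≠ j → Disjoint (B i) (B j) := by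
    intro i j hij
    by_cases hi : i = k
    · subst hi
      rw [hBk, hB j hij.symm, Finset.disjoint_insert_left]
      exact ⟨hgA j, hdis _ _ hij⟩
    · by_cases hj : j = k
      · subst hj
        rw [hBk, hB i hi, Finset.disjoint_insert_right]
        exact ⟨hgA i, hdis _ _ hij⟩
      · rw [hB i hi, hB j hj]
        exact hdis _ _ hij
  refine ⟨fun a => B (σ a), fun a => q (σ a), ?_, ?_, fun i => hq _, fun i j => hef i (σ j)⟩
  · intro i j hij
    exact hBdis _ _ (fun h => hij (σ.injective h))
  · intro x
    rw [Finset.mem_insert, ← hcov]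
    constructor
    · rintro ⟨i, hi⟩
      by_cases h : σ i = k
      · simp only [h, hBk, Finset.mem_insert] at hi
        rcases hi with h | h
        · exact Or.inl h
        · exact Or.inr ⟨k, h⟩
      · simp only [hB _ h] at hi
        exact Or.inr ⟨_, hi⟩
    · rintro (rfl | ⟨i, hi⟩)
      · exact ⟨σ.symm k, by simp [hBk]⟩
      · refine ⟨σ.symm i, ?_⟩
        simp only [Equiv.apply_symm_apply]
        by_cases h : i = k
        · subst h; rw [hBk]; exact Finset.mem_insert_of_mem hi
        · rw [hB i h]; exact hi

lemma step {N G : Type*} [Fintype N] [Nonempty N] [DecidableEq N] [DecidableEq G]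
    (w : N → Finset G → ℤ)
    (hw : ∀ i S g, w i (insert g S) = w i S ∨ w i (insert g S) = w i S + 1)
    (T : Finset G) (g : G) (hg : g ∉ T) (hS : State w T) : State w (insert g T) := by
  obtain ⟨A, q, hdis, hcov, hq, hef⟩ := hS
  let R : N → N → Prop := fun a b => w a (A b) + q b = w a (A a) + q a
  have hRrefl : ∀ a, R a a := fun a => rfl
  have hslack : ∀ a b, ¬ R a b → w a (A b) + q b + 1 ≤ w a (A a) + q a := by
    intro a b h
    have := hef a b
    have h' : w a (A b) + q b ≠ w a (A a) + q a := h
    omega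
  obtain ⟨C, hCne, hCsrc, hCconn⟩ := exists_source R
  obtain ⟨k, hkC, hkq⟩ : ∃ k ∈ C, q k = 1 ∨ ∀ x ∈ C, q x = 0 := by
    by_cases h : ∃ k ∈ C, q k = 1
    · obtain ⟨k, hk, h⟩ := h
      exact ⟨k, hk, Or.inl h⟩
    · obtain ⟨k, hk⟩ := hCne
      refine ⟨k, hk, Or.inr fun x hx => ?_⟩
      rcases hq x with h' | h'
      · exact h'
      · exact absurd ⟨x, hx, h'⟩ h
  let B : N → Finset G := Function.update A k (insert g (A k))
  have hBk : B k = insert g (A k) := by simp [B]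
  have hB : ∀ b, b ≠ k → B b = A b := fun b hb => by simp [B, hb]
  have hBle : ∀ a b, w a (A b) ≤ w a (B b) ∧ w a (B b) ≤ w a (A b) + 1 := by
    intro a b
    by_cases h : b = k
    · subst h
      rw [hBk]
      rcases hw a (A b) g with h | h <;> omega
    · rw [hB b h]; omega
  by_cases hi : ∃ i, R i k ∧ w i (insert g (A k)) = w i (A k) + 1
  · obtain ⟨i, hRi, hwi⟩ := hi
    have hiC : i ∈ C := hCsrc _ _ hRi hkC
    obtain ⟨σ, hσi, hσ', -⟩ := exists_perm Finset.univ R (by simp) k i (by simp)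
      (hCconn k hkC i hiC)
    have hσ : ∀ j, R j (σ j) := by
      intro j
      by_cases h : j = i
      · subst h; rw [hσi]; exact hRi
      · rcases hσ' j h with h | h
        · exact h
        · rw [h]
    have hσk : ∀ a, σ a = k → a = i := fun a h => σ.injective (h.trans hσi.symm)
    by_cases hk1 : q k = 1
    · refine finish w T A (Function.update q k 0) g hg hdis hcov k σ B hBk hB ?_ ?_
      · intro j
        by_cases h : j = k
        · simp [h]
        · simpa [h] using hq j
      · intro a b
        have e1 : w a (B b) + Function.update q k 0 b ≤ w a (A b) + q b := by
          by_cases h : b = k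
          · subst h
            have := (hBle a b).2
            simp only [Function.update_self]; omega
          · rw [hB b h, Function.update_of_ne h]
        have e2 : w a (A (σ a)) + q (σ a) ≤ w a (B (σ a)) + Function.update q k 0 (σ a) := by
          by_cases h : σ a = k
          · have := hσk a h
            subst this
            rw [h, hBk, hwi, hk1]; simp
          · rw [hB _ h, Function.update_of_ne h]
        have e3 : w a (A (σ a)) + q (σ a) = w a (A a) + q a := hσ a
        have := hef a b
        omega
    · have hq0 : ∀ x ∈ C, q x = 0 := hkq.resolve_left hk1
      let q' : N → ℤ := fun b => if b ∈ C ∧ b ≠ k then 1 else q b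
      have hq'le : ∀ b, q b ≤ q' b := by
        intro b
        simp only [q']
        split_ifs
        · rcases hq b with h | h <;> omega
        · exact le_rfl
      have hup : ∀ a b, w a (B b) + q' b ≤ w a (A b) + q b + 1 := by
        intro a b
        have := (hBle a b).2
        by_cases h : b ∈ C ∧ b ≠ k
        · simp [q', h.1, h.2, hB b h.2, hq0 b h.1]
        · simp only [q', h, if_false]; omega
      have hout : ∀ a b, b ∉ C → w a (B b) + q' b = w a (A b) + q b := by
        intro a b h
        rw [hB b (fun e => h (e ▸ hkC))]
        simp [q', h]
      have hσout : ∀ a, a ∉ C → σ a ∉ C := fun a ha h => ha (hCsrc _ _ (hσ a) h)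
      have hσin : ∀ a, a ∈ C → σ a ∈ C := by
        intro a ha
        by_contra hcon
        have := Equiv.Perm.perm_symm_on_of_perm_on_finset (s := Finset.univ \ C) (f := σ)
          (by intro x hx; simpa using hσout x (by simpa using hx))
          (y := σ a) (by simpa using hcon)
        simp [ha] at this
      refine finish w T A q' g hg hdis hcov k σ B hBk hB ?_ ?_
      · intro j
        simp only [q']
        split_ifs
        · exact Or.inr rfl
        · exact hq j
      · intro a b
        have e3 : w a (A (σ a)) + q (σ a) = w a (A a) + q a := hσ a
        have e4 := hef a b
        by_cases ha : a ∈ C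
        · have e5 := hup a b
          have e6 : w a (B (σ a)) + q' (σ a) = w a (A (σ a)) + q (σ a) + 1 := by
            by_cases h : σ a = k
            · have := hσk a h
              subst this
              rw [h, hBk, hwi]; simp [q']; omega
            · simp [q', h, hB _ h, hσin a ha, hq0 _ (hσin a ha)]
          omega
        · have e6 := hout a (σ a) (hσout a ha)
          by_cases hb : b ∈ C
          · have := hslack a b (fun h => ha (hCsrc _ _ h hb))
            have := hup a b
            omega
          · have := hout a b hb
            omega
  · refine finish w T A q g hg hdis hcov k 1 B hBk hB hq ?_
    intro a b
    have h1 := (hBle a a).1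
    simp only [Equiv.Perm.coe_one, id]
    have h2 := hef a b
    by_cases hb : b = k
    · subst hb
      rw [hBk]
      rcases hw a (A b) g with h | h
      · omega
      · have := hslack a b (fun hr => hi ⟨a, hr, h⟩)
        omega
    · rw [hB b hb]; omega

lemma main {N G : Type*} [Fintype N] [Nonempty N] [DecidableEq N] [DecidableEq G]
    (w : N → Finset G → ℤ) (h0 : ∀ i, w i ∅ = 0)
    (hw : ∀ i S g, w i (insert g S) = w i S ∨ w i (insert g S) = w i S + 1)
    (T : Finset G) : State w T := by
  induction T using Finset.induction_on with
  | empty => exact ⟨fun _ => ∅, fun _ => 0, by simp, by simp, by simp, by simp [h0]⟩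
  | insert g T hg ih => exact step w hw T g hg ih

end DichSub


/-- Under dichotomous valuations, envy-freeness can be achieved with
total subsidy at most `n - 1`: there exist a complete allocation `A` and
nonnegative subsidies `p` with `∑ i, p i ≤ n - 1` such that `(A, p)` is an
envy-free solution. -/
theorem total_subsidy_at_most_n_minus_one {n m : ℕ} (hn : 1 ≤ n)
    (v : Fin n → Finset (Fin m) → ℝ)
    (hempty : ∀ i, v i ∅ = 0)
    (hdich : ∀ i (S : Finset (Fin m)) (g : Fin m),
        v i (insert g S) - v i S = 0 ∨ v i (insert g S) - v i S = 1) :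
    ∃ (A : Fin n → Finset (Fin m)) (p : Fin n → ℝ),
      (∀ i j, i ≠ j → Disjoint (A i) (A j)) ∧
      (∀ g : Fin m, ∃ i, g ∈ A i) ∧
      (∀ i, 0 ≤ p i) ∧
      (∑ i, p i ≤ (n : ℝ) - 1) ∧
      (∀ i j, v i (A j) + p j ≤ v i (A i) + p i) := by
  classical
  have : Nonempty (Fin n) := ⟨⟨0, hn⟩⟩
  have hint : ∀ i (S : Finset (Fin m)), ∃ z : ℤ, v i S = z := by
    intro i S
    induction S using Finset.induction_on with
    | empty => exact ⟨0, by simp [hempty]⟩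
    | insert g S _ ih =>
      obtain ⟨z, hz⟩ := ih
      rcases hdich i S g with h | h
      · exact ⟨z, by linarith⟩
      · exact ⟨z + 1, by push_cast; linarith⟩
  choose w hwv using hint
  obtain ⟨A, q, hdis, hcov, hq, hef⟩ := DichSub.main w
    (fun i => by have := hwv i ∅; rw [hempty] at this; exact_mod_cast this.symm)
    (fun i S g => by
      rcases hdich i S g with h | h
      · left
        rw [hwv, hwv, sub_eq_zero] at h
        exact_mod_cast h
      · right
        rw [hwv, hwv, sub_eq_iff_eq_add'] at h
        exact_mod_cast h) Finset.univ
  have hefR : ∀ i j, v i (A j) + (q j : ℝ) ≤ v i (A i) + (q i : ℝ) := by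
    intro i j
    rw [hwv, hwv]
    exact_mod_cast hef i j
  have hcov' : ∀ g : Fin m, ∃ i, g ∈ A i := fun g => (hcov g).2 (Finset.mem_univ g)
  by_cases hz : ∃ i0, q i0 = 0
  · obtain ⟨i0, hi0⟩ := hz
    refine ⟨A, fun i => (q i : ℝ), hdis, hcov', ?_, ?_, hefR⟩
    · intro i
      rcases hq i with h | h <;> simp [h]
    · rw [← Finset.sum_erase_add _ _ (Finset.mem_univ i0), hi0]
      have : ∑ i ∈ Finset.univ.erase i0, (q i : ℝ) ≤ ∑ i ∈ Finset.univ.erase i0, (1 : ℝ) := by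
        apply Finset.sum_le_sum
        intro i _
        rcases hq i with h | h <;> simp [h]
      simp only [Finset.sum_const, Finset.card_erase_of_mem (Finset.mem_univ i0),
        Finset.card_univ, Fintype.card_fin, nsmul_eq_mul, mul_one, Nat.cast_sub hn] at this
      simpa using this
  · have h1 : ∀ i, q i = 1 := fun i => (hq i).resolve_left (fun h => hz ⟨i, h⟩)
    refine ⟨A, fun _ => 0, hdis, hcov', by simp, ?_, ?_⟩
    · have : (1 : ℝ) ≤ n := by exact_mod_cast hn
      simpa using this
    · intro i j
      have := hefR i j
      rw [h1, h1] at this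
      linarith
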